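/- arXiv:1302.0925 — 9 statements merged into one kernel-verified Lean document; each statement's English description precedes it below -/
import Mathlib

section
/- Let N > 0 and let k = (k1,k2,k3) ∈ ℤ³ with k3 ≠ 0. Suppose u ∈ ℂ³, b ∈ ℂ³, P ∈ ℂ, θ ∈ ℂ satisfy the Fourier-transformed magnetostrophic balance (with the convention that ∇ corresponds to multiplication by i k): N²(u × e3) = −i k P + i k2 b + N² θ e3, i k2 u − |k|² b = 0, k·u = 0, and k·b = 0, where e3 = (0,0,1) and |k|² = k1² + k2² + k3². Then u is uniquely determined by θ via u_j = M̂_j(k) θ for j = 1,2,3, where M̂_1(k) = (N⁴ k2 k3 |k|² − N² k1 k2² k3)/D(k), M̂_2(k) = (−N⁴ k1 k3 |k|² − N² k2³ k3)/D(k), M̂_3(k) = (N² k1² k2² + N² k2⁴)/D(k), and D(k) = N⁴ |k|² k3² + k2⁴. -/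
/-- **Fourier-side magnetostrophic balance determines the velocity.**
Let `N > 0` and `k = (k1,k2,k3) ∈ ℤ³` with `k3 ≠ 0`.  If `u, b ∈ ℂ³`, `P, θ ∈ ℂ`
satisfy the Fourier-transformed magnetostrophic balance
`N²(u × e3) = −i k P + i k2 b + N² θ e3`, `i k2 u − |k|² b = 0`, `k·u = 0`, `k·b = 0`,
then `u_j = M̂_j(k) θ` for `j = 1,2,3`, with the MG symbols `M̂_j`. -/
theorem mg_symbol_determined_by_balance
    (N : ℝ) (hN : 0 < N) (k1 k2 k3 : ℤ) (hk3 : k3 ≠ 0)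
    (u b : Fin 3 → ℂ) (P θ : ℂ)
    (hbal : ∀ i : Fin 3,
      (N : ℂ) ^ 2 * crossProduct u ![(0 : ℂ), 0, 1] i =
        -Complex.I * (![(k1 : ℂ), (k2 : ℂ), (k3 : ℂ)] i) * P
          + Complex.I * (k2 : ℂ) * b i
          + (N : ℂ) ^ 2 * θ * (![(0 : ℂ), 0, 1] i))
    (hind : ∀ i : Fin 3,
      Complex.I * (k2 : ℂ) * u i
        - ((k1 : ℂ) ^ 2 + (k2 : ℂ) ^ 2 + (k3 : ℂ) ^ 2) * b i = 0)
    (hdivu : (k1 : ℂ) * u 0 + (k2 : ℂ) * u 1 + (k3 : ℂ) * u 2 = 0)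
    (hdivb : (k1 : ℂ) * b 0 + (k2 : ℂ) * b 1 + (k3 : ℂ) * b 2 = 0) :
    u 0 = ((N : ℂ) ^ 4 * (k2 : ℂ) * (k3 : ℂ) * ((k1 : ℂ) ^ 2 + (k2 : ℂ) ^ 2 + (k3 : ℂ) ^ 2)
            - (N : ℂ) ^ 2 * (k1 : ℂ) * (k2 : ℂ) ^ 2 * (k3 : ℂ))
          / ((N : ℂ) ^ 4 * ((k1 : ℂ) ^ 2 + (k2 : ℂ) ^ 2 + (k3 : ℂ) ^ 2) * (k3 : ℂ) ^ 2
            + (k2 : ℂ) ^ 4) * θ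
    ∧ u 1 = (-(N : ℂ) ^ 4 * (k1 : ℂ) * (k3 : ℂ) * ((k1 : ℂ) ^ 2 + (k2 : ℂ) ^ 2 + (k3 : ℂ) ^ 2)
            - (N : ℂ) ^ 2 * (k2 : ℂ) ^ 3 * (k3 : ℂ))
          / ((N : ℂ) ^ 4 * ((k1 : ℂ) ^ 2 + (k2 : ℂ) ^ 2 + (k3 : ℂ) ^ 2) * (k3 : ℂ) ^ 2
            + (k2 : ℂ) ^ 4) * θ
    ∧ u 2 = ((N : ℂ) ^ 2 * (k1 : ℂ) ^ 2 * (k2 : ℂ) ^ 2 + (N : ℂ) ^ 2 * (k2 : ℂ) ^ 4)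
          / ((N : ℂ) ^ 4 * ((k1 : ℂ) ^ 2 + (k2 : ℂ) ^ 2 + (k3 : ℂ) ^ 2) * (k3 : ℂ) ^ 2
            + (k2 : ℂ) ^ 4) * θ := by
  have h0 := hbal 0
  have h1 := hbal 1
  have h2 := hbal 2
  have i0 := hind 0
  have i1 := hind 1
  have i2 := hind 2
  simp [crossProduct] at h0 h1 h2
  have hI : Complex.I * Complex.I = -1 := Complex.I_mul_I
  have k3R : (0 : ℝ) < (k3 : ℝ) ^ 2 := by positivity
  have hKR : (0 : ℝ) < (k1 : ℝ) ^ 2 + (k2 : ℝ) ^ 2 + (k3 : ℝ) ^ 2 := by positivity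
  have hDR : (0 : ℝ) < N ^ 4 * ((k1 : ℝ) ^ 2 + (k2 : ℝ) ^ 2 + (k3 : ℝ) ^ 2) * (k3 : ℝ) ^ 2
      + (k2 : ℝ) ^ 4 := by positivity
  have hk : (k3 : ℂ) ≠ 0 := by exact_mod_cast hk3
  have hK : (k1 : ℂ) ^ 2 + (k2 : ℂ) ^ 2 + (k3 : ℂ) ^ 2 ≠ 0 := by exact_mod_cast hKR.ne'
  have hD : (N : ℂ) ^ 4 * ((k1 : ℂ) ^ 2 + (k2 : ℂ) ^ 2 + (k3 : ℂ) ^ 2) * (k3 : ℂ) ^ 2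
      + (k2 : ℂ) ^ 4 ≠ 0 := by exact_mod_cast hDR.ne'
  clear hbal hind hKR hDR k3R
  generalize u 0 = u0 at *
  generalize u 1 = u1 at *
  generalize u 2 = u2 at *
  generalize (k1 : ℂ) = a at *
  generalize (k2 : ℂ) = c at *
  generalize (k3 : ℂ) = d at *
  generalize (N : ℂ) = n at *
  obtain ⟨K, hKd⟩ : ∃ K, K = a ^ 2 + c ^ 2 + d ^ 2 := ⟨_, rfl⟩
  rw [← hKd] at i0 i1 i2 hK hD ⊢
  have e0 : c ^ 2 * u0 + n ^ 2 * K * u1 = -a * K * (Complex.I * P) := by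
    linear_combination K * h0 - Complex.I * c * i0 + c ^ 2 * u0 * hI
  have e1 : c ^ 2 * u1 - n ^ 2 * K * u0 = -c * K * (Complex.I * P) := by
    linear_combination K * h1 - Complex.I * c * i1 + c ^ 2 * u1 * hI
  have e2 : c ^ 2 * u2 = -d * K * (Complex.I * P) + n ^ 2 * K * θ := by
    linear_combination K * h2 - Complex.I * c * i2 + c ^ 2 * u2 * hI
  have f0 : c ^ 2 * (d ^ 2 + a ^ 2) * u0 + (n ^ 2 * K * d ^ 2 + a * c * c ^ 2) * u1
      = -n ^ 2 * K * a * d * θ := by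
    linear_combination d ^ 2 * e0 - a * d * e2 + a * c ^ 2 * hdivu
  have f1 : (-n ^ 2 * K * d ^ 2 + a * c * c ^ 2) * u0 + c ^ 2 * (d ^ 2 + c ^ 2) * u1
      = -n ^ 2 * K * c * d * θ := by
    linear_combination d ^ 2 * e1 - c * d * e2 + c * c ^ 2 * hdivu
  have hX : K * d ^ 2 ≠ 0 := mul_ne_zero hK (pow_ne_zero _ hk)
  have g0 : u0 * (n ^ 4 * K * d ^ 2 + c ^ 4) = (n ^ 4 * c * d * K - n ^ 2 * a * c ^ 2 * d) * θ := by
    apply mul_left_cancel₀ hX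
    linear_combination c ^ 2 * (d ^ 2 + c ^ 2) * f0 - (n ^ 2 * K * d ^ 2 + a * c * c ^ 2) * f1
      + (c ^ 4 * d ^ 2 * u0) * hKd
  have g1 : u1 * (n ^ 4 * K * d ^ 2 + c ^ 4)
      = (-n ^ 4 * a * d * K - n ^ 2 * c ^ 3 * d) * θ := by
    apply mul_left_cancel₀ hX
    linear_combination c ^ 2 * (d ^ 2 + a ^ 2) * f1 - (-n ^ 2 * K * d ^ 2 + a * c * c ^ 2) * f0
      + (c ^ 4 * d ^ 2 * u1) * hKd
  have g2 : u2 * (n ^ 4 * K * d ^ 2 + c ^ 4)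
      = (n ^ 2 * a ^ 2 * c ^ 2 + n ^ 2 * c ^ 4) * θ := by
    apply mul_left_cancel₀ hk
    linear_combination (n ^ 4 * K * d ^ 2 + c ^ 4) * hdivu - a * g0 - c * g1
  refine ⟨?_, ?_, ?_⟩
  · rw [div_mul_eq_mul_div, eq_div_iff hD, g0]
  · rw [div_mul_eq_mul_div, eq_div_iff hD, g1]
  · rw [div_mul_eq_mul_div, eq_div_iff hD, g2]
end

section
/- There is a constant C = 2, independent of N, such that for every N > 0, every k = (k1,k2,k3) ∈ ℤ³ with k3 ≠ 0, and every j ∈ {1,2,3}, one has |M̂_j(k)| ≤ 2 √(k1² + k2² + k3²). In other words, the MG symbol grows at most linearly in |k|, uniformly in N. -/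
/-- `|k|²` for `k = (k1,k2,k3) ∈ ℤ³`, as a real number. -/
noncomputable def kSq (k1 k2 k3 : ℤ) : ℝ := (k1 : ℝ) ^ 2 + (k2 : ℝ) ^ 2 + (k3 : ℝ) ^ 2

/-- The denominator `D(k) = N⁴|k|²k3² + k2⁴` of the MG symbols. -/
noncomputable def Dmg (N : ℝ) (k1 k2 k3 : ℤ) : ℝ :=
  N ^ 4 * kSq k1 k2 k3 * (k3 : ℝ) ^ 2 + (k2 : ℝ) ^ 4

/-- The first magnetogeostrophic symbol `M̂₁(k)`. -/
noncomputable def Mhat1 (N : ℝ) (k1 k2 k3 : ℤ) : ℝ :=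
  if k3 = 0 then 0 else
    (N ^ 4 * (k2 : ℝ) * (k3 : ℝ) * kSq k1 k2 k3
      - N ^ 2 * (k1 : ℝ) * (k2 : ℝ) ^ 2 * (k3 : ℝ)) / Dmg N k1 k2 k3

/-- The second magnetogeostrophic symbol `M̂₂(k)`. -/
noncomputable def Mhat2 (N : ℝ) (k1 k2 k3 : ℤ) : ℝ :=
  if k3 = 0 then 0 else
    (-N ^ 4 * (k1 : ℝ) * (k3 : ℝ) * kSq k1 k2 k3
      - N ^ 2 * (k2 : ℝ) ^ 3 * (k3 : ℝ)) / Dmg N k1 k2 k3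

/-- The third magnetogeostrophic symbol `M̂₃(k)`. -/
noncomputable def Mhat3 (N : ℝ) (k1 k2 k3 : ℤ) : ℝ :=
  if k3 = 0 then 0 else
    (N ^ 2 * (k1 : ℝ) ^ 2 * (k2 : ℝ) ^ 2 + N ^ 2 * (k2 : ℝ) ^ 4) / Dmg N k1 k2 k3


/-- A term `N⁴ u z s²` is at most `N⁴ s² z² s`. -/
lemma mg_aux_one (p s u z : ℝ) (hu : |u| ≤ s) (hz : 1 ≤ |z|) :
    |p ^ 2 * u * z * s ^ 2| ≤ s * (p * s * |z|) ^ 2 := by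
  have hs : 0 ≤ s := le_trans (abs_nonneg u) hu
  have e : |p ^ 2 * u * z * s ^ 2| = (p ^ 2 * s ^ 2 * |z|) * |u| := by
    rw [abs_mul, abs_mul, abs_mul, abs_of_nonneg (sq_nonneg p), abs_of_nonneg (sq_nonneg s)]
    ring
  rw [e]
  calc (p ^ 2 * s ^ 2 * |z|) * |u| ≤ (p ^ 2 * s ^ 2 * |z|) * s := by gcongr
    _ = (p ^ 2 * s ^ 2 * |z|) * s * 1 := by ring
    _ ≤ (p ^ 2 * s ^ 2 * |z|) * s * |z| := by gcongr
    _ = s * (p * s * |z|) ^ 2 := by ring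

/-- A term `N² u k2² z` is at most `(N² s |z|) k2²`. -/
lemma mg_aux_two (p s u y z : ℝ) (hp : 0 ≤ p) (hu : |u| ≤ s) :
    |p * u * y ^ 2 * z| ≤ (p * s * |z|) * y ^ 2 := by
  rw [abs_mul, abs_mul, abs_mul, abs_of_nonneg hp, abs_of_nonneg (sq_nonneg y)]
  calc p * |u| * y ^ 2 * |z| ≤ p * s * y ^ 2 * |z| := by gcongr
    _ = (p * s * |z|) * y ^ 2 := by ring

/-- **Linear growth of the MG symbols, uniformly in `N`:** for every `N > 0` and every
`k = (k1,k2,k3) ∈ ℤ³` with `k3 ≠ 0`, each symbol satisfies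
`|M̂_j(k)| ≤ 2 √(k1² + k2² + k3²)`, with the constant `2` independent of `N`. -/
theorem mg_symbol_linear_growth (N : ℝ) (hN : 0 < N) (k1 k2 k3 : ℤ) (hk3 : k3 ≠ 0) :
    |Mhat1 N k1 k2 k3| ≤ 2 * Real.sqrt (kSq k1 k2 k3)
    ∧ |Mhat2 N k1 k2 k3| ≤ 2 * Real.sqrt (kSq k1 k2 k3)
    ∧ |Mhat3 N k1 k2 k3| ≤ 2 * Real.sqrt (kSq k1 k2 k3) := by
  have hz : (1 : ℝ) ≤ |(k3 : ℝ)| := by exact_mod_cast Int.one_le_abs hk3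
  have hK : kSq k1 k2 k3 = (k1 : ℝ) ^ 2 + (k2 : ℝ) ^ 2 + (k3 : ℝ) ^ 2 := rfl
  have hK0 : 0 ≤ kSq k1 k2 k3 := by rw [hK]; positivity
  have hs2 : Real.sqrt (kSq k1 k2 k3) ^ 2 = kSq k1 k2 k3 := Real.sq_sqrt hK0
  simp only [Mhat1, Mhat2, Mhat3, Dmg, if_neg hk3]
  have hx : |(k1 : ℝ)| ≤ Real.sqrt (kSq k1 k2 k3) := by
    apply Real.abs_le_sqrt; rw [hK]; nlinarith [sq_nonneg (k2 : ℝ), sq_nonneg (k3 : ℝ)]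
  have hy : |(k2 : ℝ)| ≤ Real.sqrt (kSq k1 k2 k3) := by
    apply Real.abs_le_sqrt; rw [hK]; nlinarith [sq_nonneg (k1 : ℝ), sq_nonneg (k3 : ℝ)]
  have hs1 : 1 ≤ Real.sqrt (kSq k1 k2 k3) := by
    refine hz.trans (Real.abs_le_sqrt ?_)
    rw [hK]; nlinarith [sq_nonneg (k1 : ℝ), sq_nonneg (k2 : ℝ)]
  rw [← hs2] at hK
  generalize Real.sqrt (kSq k1 k2 k3) = s at *
  simp only [← hs2]
  generalize (k1 : ℝ) = x at *
  generalize (k2 : ℝ) = y at *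
  generalize (k3 : ℝ) = z at *
  have hp : 0 < N ^ 2 := by positivity
  have e4 : N ^ 4 = (N ^ 2) ^ 2 := by ring
  rw [e4]
  generalize N ^ 2 = p at *
  have hz0 : 0 < |z| := by linarith
  have hs0 : 0 < s := by linarith
  have hD : p ^ 2 * s ^ 2 * z ^ 2 + y ^ 4 = (p * s * |z|) ^ 2 + (y ^ 2) ^ 2 := by
    rw [mul_pow, mul_pow, sq_abs]; ring
  have ha : 0 < p * s * |z| := by positivity
  have hDpos : 0 < (p * s * |z|) ^ 2 + (y ^ 2) ^ 2 := by positivity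
  have hab : (p * s * |z|) * y ^ 2 ≤ (p * s * |z|) ^ 2 + (y ^ 2) ^ 2 := by
    nlinarith [sq_nonneg (p * s * |z| - y ^ 2), sq_nonneg (p * s * |z|), sq_nonneg (y ^ 2)]
  have hsab : (p * s * |z|) * y ^ 2 ≤ s * ((p * s * |z|) ^ 2 + (y ^ 2) ^ 2) :=
    hab.trans (le_mul_of_one_le_left hDpos.le hs1)
  have hsb : 0 ≤ s * (y ^ 2) ^ 2 := by positivity
  rw [hD]
  refine ⟨?_, ?_, ?_⟩
  · rw [abs_div, abs_of_pos hDpos, div_le_iff₀ hDpos]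
    have h1 := mg_aux_one p s y z hy hz
    have h2 := mg_aux_two p s x y z hp.le hx
    have h3 := abs_sub (p ^ 2 * y * z * s ^ 2) (p * x * y ^ 2 * z)
    linarith
  · rw [abs_div, abs_of_pos hDpos, div_le_iff₀ hDpos]
    have h1 := mg_aux_one p s x z hx hz
    have h2 := mg_aux_two p s y y z hp.le hy
    have h3 := abs_add_le (p ^ 2 * x * z * s ^ 2) (p * y * y ^ 2 * z)
    rw [show -p ^ 2 * x * z * s ^ 2 - p * y ^ 3 * z
      = -(p ^ 2 * x * z * s ^ 2 + p * y * y ^ 2 * z) by ring, abs_neg]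
    linarith
  · rw [abs_div, abs_of_pos hDpos, div_le_iff₀ hDpos, abs_of_nonneg (by positivity)]
    have h1 : p * x ^ 2 * y ^ 2 + p * y ^ 4 ≤ s * ((p * s * |z|) * y ^ 2) := by
      calc p * x ^ 2 * y ^ 2 + p * y ^ 4 = p * y ^ 2 * (x ^ 2 + y ^ 2) := by ring
        _ ≤ p * y ^ 2 * s ^ 2 := by
          gcongr
          rw [hK]; nlinarith [sq_nonneg z]
        _ = p * y ^ 2 * s ^ 2 * 1 := by ring
        _ ≤ p * y ^ 2 * s ^ 2 * |z| := by gcongr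
        _ = s * ((p * s * |z|) * y ^ 2) := by ring
    have h2 := mul_le_mul_of_nonneg_left hab hs0.le
    have h3 : 0 ≤ s * ((p * s * |z|) ^ 2 + (y ^ 2) ^ 2) := by positivity
    linarith
end

section
/- The MG symbol M̂_3 is unbounded along the curved regions where k3 = O(1) and k2 = O(|k1|^r) with 0 < r ≤ 1/2: for every N > 0 and every r ∈ (0, 1/2], the sequence of frequencies k^{(j)} = (j, ⌊j^r⌋, 1), j ≥ 1, satisfies M̂_3(k^{(j)}) → ∞ as j → ∞. -/
/-- **Unboundedness of `M̂₃` along curved frequency regions:** for every `N > 0` and every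
`r ∈ (0, 1/2]`, the sequence of frequencies `k⁽ʲ⁾ = (j, ⌊jʳ⌋, 1)` satisfies
`M̂₃(k⁽ʲ⁾) → ∞` as `j → ∞`. -/
theorem mg_symbol3_unbounded_on_curved_region (N : ℝ) (hN : 0 < N)
    (r : ℝ) (hr : r ∈ Set.Ioc (0 : ℝ) (1 / 2)) :
    Filter.Tendsto (fun j : ℕ => Mhat3 N (j : ℤ) ⌊(j : ℝ) ^ r⌋ 1)
      Filter.atTop Filter.atTop := by
  obtain ⟨hr0, hr1⟩ := hr
  have hc : 0 < N ^ 2 / (3 * N ^ 4 + 1) := by positivity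
  have hf : Filter.Tendsto (fun j : ℕ => ((⌊(j : ℝ) ^ r⌋ : ℤ) : ℝ)) Filter.atTop Filter.atTop :=
    tendsto_intCast_atTop_atTop.comp
      (tendsto_floor_atTop.comp ((tendsto_rpow_atTop hr0).comp tendsto_natCast_atTop_atTop))
  refine Filter.tendsto_atTop_mono' _ ?_ (hf.const_mul_atTop hc)
  filter_upwards [hf.eventually_ge_atTop 1, Filter.eventually_ge_atTop 1] with j hm hj
  have hj1 : (1 : ℝ) ≤ (j : ℝ) := by exact_mod_cast hj
  have hle : ((⌊(j : ℝ) ^ r⌋ : ℤ) : ℝ) ≤ (j : ℝ) ^ r := Int.floor_le _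
  have hle2 : (j : ℝ) ^ r ≤ (j : ℝ) ^ (1 / 2 : ℝ) := Real.rpow_le_rpow_of_exponent_le hj1 hr1
  rw [← Real.sqrt_eq_rpow] at hle2
  have hs : Real.sqrt (j : ℝ) ^ 2 = j := Real.sq_sqrt (by linarith)
  simp only [Mhat3, Dmg, kSq, one_ne_zero, if_false, Int.cast_one, Int.cast_natCast]
  generalize ((⌊(j : ℝ) ^ r⌋ : ℤ) : ℝ) = m at *
  generalize (j : ℝ) = x at *
  have hm2 : m ^ 2 ≤ x := by
    rw [← hs]
    exact pow_le_pow_left₀ (by linarith) (hle.trans hle2) 2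
  have hm4 : m ^ 4 ≤ x ^ 2 := by
    have := pow_le_pow_left₀ (by positivity) hm2 2
    nlinarith
  have hx : x ≤ x ^ 2 := by nlinarith
  have hmm : m ≤ m ^ 2 := by nlinarith
  have hN4 : 0 < N ^ 4 := by positivity
  have hD : N ^ 4 * (x ^ 2 + m ^ 2 + 1 ^ 2) * 1 ^ 2 + m ^ 4 ≤ (3 * N ^ 4 + 1) * x ^ 2 := by
    have : N ^ 4 * (x ^ 2 + m ^ 2 + 1) ≤ N ^ 4 * (3 * x ^ 2) :=
      mul_le_mul_of_nonneg_left (by linarith) hN4.le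
    linarith
  have hx0 : 0 < x := by linarith
  rw [le_div_iff₀ (by positivity)]
  calc N ^ 2 / (3 * N ^ 4 + 1) * m * (N ^ 4 * (x ^ 2 + m ^ 2 + 1 ^ 2) * 1 ^ 2 + m ^ 4)
      ≤ N ^ 2 / (3 * N ^ 4 + 1) * m * ((3 * N ^ 4 + 1) * x ^ 2) :=
        mul_le_mul_of_nonneg_left hD (mul_nonneg hc.le (by linarith))
    _ = N ^ 2 * x ^ 2 * m := by field_simp
    _ ≤ N ^ 2 * x ^ 2 * m ^ 2 := mul_le_mul_of_nonneg_left hmm (by positivity)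
    _ ≤ N ^ 2 * x ^ 2 * m ^ 2 + N ^ 2 * m ^ 4 := le_add_of_nonneg_right (by positivity)
end

section
/- For every N > 0 and every nonzero rational q there exists a constant C = C(q, N) < ∞ such that for all k = (k1,k2,k3) ∈ ℤ³ lying on the frequency plane P_q = {k ∈ ℤ³ : k2 = q·k1} and having k3 ≠ 0, one has |M̂_j(k)| ≤ C for j = 1,2,3. That is, the MG symbols are uniformly bounded on each rational frequency plane P_q with q ≠ 0. -/
theorem quartic_aux (a b e x z : ℝ) :
    |a * (x ^ 3 * z) + b * (x * z ^ 3) + e * x ^ 4| ≤ (|a| + |b| + |e|) * (x ^ 4 + z ^ 4) := by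
  have h1 : |x ^ 3 * z| ≤ x ^ 4 + z ^ 4 := by
    rw [abs_le]
    constructor <;>
      nlinarith [sq_nonneg (x ^ 2 - x * z), sq_nonneg (x ^ 2 + x * z), sq_nonneg (x ^ 2 - z ^ 2),
        sq_nonneg (x ^ 2), sq_nonneg (z ^ 2)]
  have h2 : |x * z ^ 3| ≤ x ^ 4 + z ^ 4 := by
    rw [abs_le]
    constructor <;>
      nlinarith [sq_nonneg (z ^ 2 - x * z), sq_nonneg (z ^ 2 + x * z), sq_nonneg (x ^ 2 - z ^ 2),
        sq_nonneg (x ^ 2), sq_nonneg (z ^ 2)]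
  have h3 : |x ^ 4| ≤ x ^ 4 + z ^ 4 := by
    rw [abs_of_nonneg (by positivity)]
    have : 0 ≤ z ^ 4 := by positivity
    linarith
  calc _ ≤ |a * (x ^ 3 * z)| + |b * (x * z ^ 3)| + |e * x ^ 4| := abs_add_three _ _ _
    _ = |a| * |x ^ 3 * z| + |b| * |x * z ^ 3| + |e| * |x ^ 4| := by simp only [abs_mul]
    _ ≤ |a| * (x ^ 4 + z ^ 4) + |b| * (x ^ 4 + z ^ 4) + |e| * (x ^ 4 + z ^ 4) := by gcongr
    _ = _ := by ring

theorem quot_aux (a b e x z c D n : ℝ) (hc : 0 < c) (hD : 0 < D)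
    (h : c * (x ^ 4 + z ^ 4) ≤ D)
    (hn : n = a * (x ^ 3 * z) + b * (x * z ^ 3) + e * x ^ 4) :
    |n / D| ≤ (|a| + |b| + |e|) / c := by
  rw [abs_div, abs_of_pos hD, div_le_div_iff₀ hD hc, hn]
  calc _ ≤ (|a| + |b| + |e|) * (x ^ 4 + z ^ 4) * c := by
        gcongr
        exact quartic_aux a b e x z
    _ = (|a| + |b| + |e|) * (c * (x ^ 4 + z ^ 4)) := by ring
    _ ≤ _ := by gcongr

/-- **Uniform boundedness of the MG symbols on rational frequency planes:** for every
`N > 0` and every nonzero rational `q` there is a finite constant `C = C(q,N)` such that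
`|M̂_j(k)| ≤ C` for `j = 1,2,3` and all `k = (k1,k2,k3) ∈ ℤ³` with `k3 ≠ 0` lying on the
plane `P_q = {k : k2 = q·k1}`. -/
theorem mg_symbol_bounded_on_frequency_plane (N : ℝ) (hN : 0 < N) (q : ℚ) (hq : q ≠ 0) :
    ∃ C : ℝ, ∀ k1 k2 k3 : ℤ, k3 ≠ 0 → (k2 : ℚ) = q * (k1 : ℚ) →
      |Mhat1 N k1 k2 k3| ≤ C ∧ |Mhat2 N k1 k2 k3| ≤ C ∧ |Mhat3 N k1 k2 k3| ≤ C := by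
  obtain ⟨r, hr⟩ : ∃ r : ℝ, r = (q : ℝ) := ⟨_, rfl⟩
  have hr0 : r ≠ 0 := by rw [hr]; exact_mod_cast hq
  have hr4 : 0 < r ^ 4 := by positivity
  have hN4 : 0 < N ^ 4 := by positivity
  obtain ⟨c, hc, hcN, hcr⟩ : ∃ c : ℝ, 0 < c ∧ c ≤ N ^ 4 ∧ c ≤ r ^ 4 :=
    ⟨min (N ^ 4) (r ^ 4), lt_min hN4 hr4, min_le_left _ _, min_le_right _ _⟩
  refine ⟨max ((|N ^ 4 * r * (1 + r ^ 2) - N ^ 2 * r ^ 2| + |N ^ 4 * r| + |(0 : ℝ)|) / c)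
    (max ((|-N ^ 4 * (1 + r ^ 2) - N ^ 2 * r ^ 3| + |-N ^ 4| + |(0 : ℝ)|) / c)
      ((|(0 : ℝ)| + |(0 : ℝ)| + |N ^ 2 * r ^ 2 + N ^ 2 * r ^ 4|) / c)), ?_⟩
  intro k1 k2 k3 h3 h
  have hk : (k2 : ℝ) = r * (k1 : ℝ) := by rw [hr]; exact_mod_cast h
  have hz : (k3 : ℝ) ≠ 0 := by exact_mod_cast h3
  have hle : c * ((k1 : ℝ) ^ 4 + (k3 : ℝ) ^ 4) ≤ Dmg N k1 k2 k3 := by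
    have e1 : c * (k1 : ℝ) ^ 4 ≤ r ^ 4 * (k1 : ℝ) ^ 4 := by gcongr
    have e2 : c * (k3 : ℝ) ^ 4 ≤ N ^ 4 * (k3 : ℝ) ^ 4 := by gcongr
    have e3 : 0 ≤ N ^ 4 * (((k1 : ℝ) ^ 2 + (r * k1) ^ 2) * (k3 : ℝ) ^ 2) := by positivity
    unfold Dmg kSq
    rw [hk]
    linarith
  have hD : 0 < Dmg N k1 k2 k3 := lt_of_lt_of_le (by positivity) hle
  refine ⟨le_max_of_le_left ?_, le_max_of_le_right (le_max_of_le_left ?_),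
    le_max_of_le_right (le_max_of_le_right ?_)⟩
  · rw [Mhat1, if_neg h3]
    refine quot_aux _ _ _ (k1 : ℝ) (k3 : ℝ) c _ _ hc hD hle ?_
    rw [kSq, hk]; ring
  · rw [Mhat2, if_neg h3]
    refine quot_aux _ _ _ (k1 : ℝ) (k3 : ℝ) c _ _ hc hD hle ?_
    rw [kSq, hk]; ring
  · rw [Mhat3, if_neg h3]
    refine quot_aux _ _ _ (k1 : ℝ) (k3 : ℝ) c _ _ hc hD hle ?_
    rw [hk]; ring
end

section
/- Let N > 0, ε_κ ≥ 0, let m ≥ 1 be an integer, let k1, k2 be nonzero integers, and let σ > 0 be a real number. Set σ_p = σ + ε_κ(k1² + k2² + (mp)²) for p = 1, 2. If 1/(α_1 α_2) ≤ σ_1 σ_2 ≤ 2/(α_1 α_2), then σ obeys the two-sided bound: (m N²/2) · k2²(k1² + k2²)/(4N⁴m²(k1² + k2² + 4m²) + k2⁴) − ε_κ(k1² + k2² + 4m²) ≤ σ ≤ m N² · k2²(k1² + k2²)/(N⁴m²(k1² + k2² + m²) + k2⁴) − ε_κ(k1² + k2² + m²). -/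
/-- The coefficients `α_p = 2(N⁴(mp)²(k1² + k2² + (mp)²) + k2⁴) / (m N² k2² (k1² + k2²))`. -/
noncomputable def alphaMG (N : ℝ) (m : ℕ) (k1 k2 : ℤ) (p : ℕ) : ℝ :=
  2 * (N ^ 4 * ((m : ℝ) * (p : ℝ)) ^ 2
        * ((k1 : ℝ) ^ 2 + (k2 : ℝ) ^ 2 + ((m : ℝ) * (p : ℝ)) ^ 2) + (k2 : ℝ) ^ 4)
    / ((m : ℝ) * N ^ 2 * (k2 : ℝ) ^ 2 * ((k1 : ℝ) ^ 2 + (k2 : ℝ) ^ 2))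

/-- A sequence `(c_p)_{p ≥ 1}` solves the MG eigenvalue recursion with shifts `(σ_p)` and
coefficients `(α_p)` if `σ_1 c_1 + c_2/α_2 = 0` and
`σ_p c_p + c_{p+1}/α_{p+1} + c_{p−1}/α_{p−1} = 0` for all `p ≥ 2`. -/
def SolvesMGRecursion (α σ c : ℕ → ℝ) : Prop :=
  σ 1 * c 1 + c 2 / α 2 = 0 ∧
  ∀ p : ℕ, 2 ≤ p → σ p * c p + c (p + 1) / α (p + 1) + c (p - 1) / α (p - 1) = 0

/-- A sequence `(c_p)_{p ≥ 1}` decays exponentially in `p` if there are `C > 0` and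
`λ ∈ (0,1)` with `|c_p| ≤ C λ^p` for all `p ≥ 1`. -/
def DecaysExponentially (c : ℕ → ℝ) : Prop :=
  ∃ C : ℝ, 0 < C ∧ ∃ lam : ℝ, lam ∈ Set.Ioo (0 : ℝ) 1 ∧ ∀ p : ℕ, 1 ≤ p → |c p| ≤ C * lam ^ p


/-- **Two-sided bound on the eigenvalue from the continued-fraction estimate:** let
`N > 0`, `ε_κ ≥ 0`, `m ≥ 1` an integer, `k1, k2` nonzero integers, `σ > 0`, and set
`σ_p = σ + ε_κ(k1² + k2² + (mp)²)` for `p = 1,2`.  If `1/(α_1α_2) ≤ σ_1σ_2 ≤ 2/(α_1α_2)`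
then
`(mN²/2)·k2²(k1²+k2²)/(4N⁴m²(k1²+k2²+4m²)+k2⁴) − ε_κ(k1²+k2²+4m²) ≤ σ` and
`σ ≤ mN²·k2²(k1²+k2²)/(N⁴m²(k1²+k2²+m²)+k2⁴) − ε_κ(k1²+k2²+m²)`. -/
theorem mg_eigenvalue_two_sided_bound (N εκ σ : ℝ) (hN : 0 < N) (hε : 0 ≤ εκ)
    (m : ℕ) (hm : 1 ≤ m) (k1 k2 : ℤ) (hk1 : k1 ≠ 0) (hk2 : k2 ≠ 0) (hσ : 0 < σ)
    (hlow : 1 / (alphaMG N m k1 k2 1 * alphaMG N m k1 k2 2)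
      ≤ (σ + εκ * ((k1 : ℝ) ^ 2 + (k2 : ℝ) ^ 2 + ((m : ℝ) * 1) ^ 2))
        * (σ + εκ * ((k1 : ℝ) ^ 2 + (k2 : ℝ) ^ 2 + ((m : ℝ) * 2) ^ 2)))
    (hhigh : (σ + εκ * ((k1 : ℝ) ^ 2 + (k2 : ℝ) ^ 2 + ((m : ℝ) * 1) ^ 2))
        * (σ + εκ * ((k1 : ℝ) ^ 2 + (k2 : ℝ) ^ 2 + ((m : ℝ) * 2) ^ 2))
      ≤ 2 / (alphaMG N m k1 k2 1 * alphaMG N m k1 k2 2)) :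
    ((m : ℝ) * N ^ 2 / 2) * ((k2 : ℝ) ^ 2 * ((k1 : ℝ) ^ 2 + (k2 : ℝ) ^ 2))
        / (4 * N ^ 4 * (m : ℝ) ^ 2 * ((k1 : ℝ) ^ 2 + (k2 : ℝ) ^ 2 + 4 * (m : ℝ) ^ 2)
            + (k2 : ℝ) ^ 4)
        - εκ * ((k1 : ℝ) ^ 2 + (k2 : ℝ) ^ 2 + 4 * (m : ℝ) ^ 2) ≤ σ
    ∧ σ ≤ (m : ℝ) * N ^ 2 * ((k2 : ℝ) ^ 2 * ((k1 : ℝ) ^ 2 + (k2 : ℝ) ^ 2))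
        / (N ^ 4 * (m : ℝ) ^ 2 * ((k1 : ℝ) ^ 2 + (k2 : ℝ) ^ 2 + (m : ℝ) ^ 2)
            + (k2 : ℝ) ^ 4)
        - εκ * ((k1 : ℝ) ^ 2 + (k2 : ℝ) ^ 2 + (m : ℝ) ^ 2) := by
  have hM : (0 : ℝ) < m := by exact_mod_cast hm
  have ha : (0 : ℝ) < (k1 : ℝ) ^ 2 := by
    have : (k1 : ℝ) ≠ 0 := by exact_mod_cast hk1
    positivity
  have hb0 : (k2 : ℝ) ≠ 0 := by exact_mod_cast hk2
  have hb : (0 : ℝ) < (k2 : ℝ) ^ 2 := by positivity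
  unfold alphaMG at hlow hhigh
  push_cast at hlow hhigh
  generalize (m : ℝ) = M at *
  generalize (k1 : ℝ) = a at *
  generalize (k2 : ℝ) = b at *
  obtain ⟨D, hD⟩ : ∃ D, D = M * N ^ 2 * b ^ 2 * (a ^ 2 + b ^ 2) := ⟨_, rfl⟩
  obtain ⟨A1, hA1⟩ : ∃ A, A = N ^ 4 * M ^ 2 * (a ^ 2 + b ^ 2 + M ^ 2) + b ^ 4 := ⟨_, rfl⟩
  obtain ⟨A2, hA2⟩ : ∃ A, A = 4 * N ^ 4 * M ^ 2 * (a ^ 2 + b ^ 2 + 4 * M ^ 2) + b ^ 4 :=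
    ⟨_, rfl⟩
  have hDp : 0 < D := by rw [hD]; positivity
  have hA1p : 0 < A1 := by rw [hA1]; positivity
  have hA2p : 0 < A2 := by rw [hA2]; positivity
  have hA12 : A1 ≤ A2 := by
    have : 0 ≤ N ^ 4 * M ^ 2 * (3 * (a ^ 2 + b ^ 2) + 15 * M ^ 2) := by positivity
    rw [hA1, hA2]; linarith
  obtain ⟨s1, hs1⟩ : ∃ s, s = σ + εκ * (a ^ 2 + b ^ 2 + M ^ 2) := ⟨_, rfl⟩
  obtain ⟨s2, hs2⟩ : ∃ s, s = σ + εκ * (a ^ 2 + b ^ 2 + 4 * M ^ 2) := ⟨_, rfl⟩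
  have hs1p : 0 < s1 := by rw [hs1]; positivity
  have hs12 : s1 ≤ s2 := by
    have : 0 ≤ εκ * (3 * M ^ 2) := by positivity
    rw [hs1, hs2]; linarith
  obtain ⟨b1, hb1⟩ : ∃ s, s = D / (2 * A1) := ⟨_, rfl⟩
  obtain ⟨b2, hb2⟩ : ∃ s, s = D / (2 * A2) := ⟨_, rfl⟩
  have hb1p : 0 < b1 := by rw [hb1]; positivity
  have hb2p : 0 < b2 := by rw [hb2]; positivity
  have hb12 : b2 ≤ b1 := by rw [hb1, hb2]; gcongr
  have e1 : 2 * (N ^ 4 * (M * 1) ^ 2 * (a ^ 2 + b ^ 2 + (M * 1) ^ 2) + b ^ 4) = 2 * A1 := by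
    rw [hA1]; ring
  have e2 : 2 * (N ^ 4 * (M * 2) ^ 2 * (a ^ 2 + b ^ 2 + (M * 2) ^ 2) + b ^ 4) = 2 * A2 := by
    rw [hA2]; ring
  have e3 : σ + εκ * (a ^ 2 + b ^ 2 + (M * 1) ^ 2) = s1 := by rw [hs1]; ring
  have e4 : σ + εκ * (a ^ 2 + b ^ 2 + (M * 2) ^ 2) = s2 := by rw [hs2]; ring
  have e5 : 1 / (2 * A1 / D * (2 * A2 / D)) = b1 * b2 := by rw [hb1, hb2]; field_simp
  have e6 : 2 / (2 * A1 / D * (2 * A2 / D)) = 2 * (b1 * b2) := by rw [← e5]; field_simp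
  rw [e1, e2, e3, e4, ← hD, e5] at hlow
  rw [e1, e2, e3, e4, ← hD, e6] at hhigh
  have g1 : M * N ^ 2 / 2 * (b ^ 2 * (a ^ 2 + b ^ 2)) / A2 = b2 := by
    rw [hb2, hD]; field_simp
  have g2 : M * N ^ 2 * (b ^ 2 * (a ^ 2 + b ^ 2)) / A1 = 2 * b1 := by
    rw [hb1, hD]; field_simp
  rw [← hA1, ← hA2, g1, g2]
  have r1 : b2 ≤ s2 := by
    by_contra! h
    nlinarith
  have r2 : s1 ≤ 2 * b1 := by
    by_contra! h
    nlinarith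
  constructor <;> linarith
end

section
/- Fix N > 0 and an integer m ≥ 1, and for ε_κ > 0 define G(ε_κ) = sup over nonzero integers k1, k2 of [(m N²/2) · k2²(k1² + k2²)/(4N⁴m²(k1² + k2² + 4m²) + k2⁴) − ε_κ(k1² + k2² + 4m²)]. Then liminf as ε_κ → 0⁺ of ε_κ · G(ε_κ) ≥ 1/2⁸. In particular, the maximal lower bound on the unstable eigenvalue of the linearized dissipative MG operator is of order 1/(2⁸ ε_κ) as ε_κ → 0; a near-optimal choice of frequencies is k1 ≈ 1/(16 ε_κ) and k2 ≈ N √(m/(8 ε_κ)). -/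
/-- The maximal lower bound `G(ε_κ)`: the supremum over nonzero integers `k1, k2` of
`(mN²/2)·k2²(k1²+k2²)/(4N⁴m²(k1²+k2²+4m²)+k2⁴) − ε_κ(k1²+k2²+4m²)`. -/
noncomputable def mgMaxGrowth (N : ℝ) (m : ℕ) (εκ : ℝ) : ℝ :=
  sSup { x : ℝ | ∃ k1 k2 : ℤ, k1 ≠ 0 ∧ k2 ≠ 0 ∧
    x = ((m : ℝ) * N ^ 2 / 2) * ((k2 : ℝ) ^ 2 * ((k1 : ℝ) ^ 2 + (k2 : ℝ) ^ 2))
          / (4 * N ^ 4 * (m : ℝ) ^ 2 * ((k1 : ℝ) ^ 2 + (k2 : ℝ) ^ 2 + 4 * (m : ℝ) ^ 2)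
              + (k2 : ℝ) ^ 4)
        - εκ * ((k1 : ℝ) ^ 2 + (k2 : ℝ) ^ 2 + 4 * (m : ℝ) ^ 2) }

open Filter Topology in
theorem mg_value_le (N : ℝ) (hN : 0 < N) (m : ℝ) (hm : 0 < m) (e : ℝ) (he : 0 < e)
    (a b : ℝ) (hb : 0 < b) (ha : 0 ≤ a) :
    (m * N ^ 2 / 2) * (b * (a + b)) / (4 * N ^ 4 * m ^ 2 * (a + b + 4 * m ^ 2) + b ^ 2)
      - e * (a + b + 4 * m ^ 2) ≤ 1 / 256 / e := by
  obtain ⟨s, hs, hs2⟩ : ∃ s : ℝ, 0 < s ∧ s ^ 2 = a + b :=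
    ⟨√(a + b), Real.sqrt_pos.2 (by positivity), Real.sq_sqrt (by positivity)⟩
  rw [← hs2]
  have h1 : (m * N ^ 2 / 2) * (b * s ^ 2) / (4 * N ^ 4 * m ^ 2 * (s ^ 2 + 4 * m ^ 2) + b ^ 2)
      ≤ s / 8 := by
    rw [div_le_iff₀ (by positivity)]
    have h2 : 0 ≤ s * (2 * N ^ 2 * m * s - b) ^ 2 := by positivity
    have h3 : 0 ≤ s * (4 * N ^ 4 * m ^ 2 * (4 * m ^ 2)) := by positivity
    nlinarith
  have h4 : s / 8 - e * s ^ 2 ≤ 1 / 256 / e := by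
    rw [le_div_iff₀ he]
    nlinarith [sq_nonneg (e * s - 1 / 16)]
  have h5 : 0 ≤ e * (4 * m ^ 2) := by positivity
  nlinarith

open Filter Topology in
theorem mg_max_growth_liminf (N : ℝ) (hN : 0 < N) (m : ℕ) (hm : 1 ≤ m) :
    (1 : ℝ) / 2 ^ 8 ≤
      Filter.liminf (fun εκ : ℝ => εκ * mgMaxGrowth N m εκ) (nhdsWithin 0 (Set.Ioi 0)) := by
  have hm0 : (0 : ℝ) < m := by exact_mod_cast hm
  have hub : ∀ e : ℝ, 0 < e → ∀ x ∈ { x : ℝ | ∃ k1 k2 : ℤ, k1 ≠ 0 ∧ k2 ≠ 0 ∧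
    x = ((m : ℝ) * N ^ 2 / 2) * ((k2 : ℝ) ^ 2 * ((k1 : ℝ) ^ 2 + (k2 : ℝ) ^ 2))
          / (4 * N ^ 4 * (m : ℝ) ^ 2 * ((k1 : ℝ) ^ 2 + (k2 : ℝ) ^ 2 + 4 * (m : ℝ) ^ 2)
              + (k2 : ℝ) ^ 4)
        - e * ((k1 : ℝ) ^ 2 + (k2 : ℝ) ^ 2 + 4 * (m : ℝ) ^ 2) }, x ≤ 1 / 256 / e := by
    rintro e he x ⟨k1, k2, h1, h2, rfl⟩
    have hk2 : (k2 : ℝ) ≠ 0 := by exact_mod_cast h2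
    have := mg_value_le N hN m hm0 e he ((k1 : ℝ) ^ 2) ((k2 : ℝ) ^ 2) (by positivity)
      (by positivity)
    rwa [← pow_mul] at this
  set c : ℝ := N * √(m / 8) with hc
  have hcpos : 0 < c := by positivity
  have hc2 : c ^ 2 = N ^ 2 * m / 8 := by
    rw [hc, mul_pow, Real.sq_sqrt (by positivity)]; ring
  have hinv : Tendsto (fun e : ℝ => e⁻¹) (𝓝[>] 0) atTop := tendsto_inv_nhdsGT_zero
  have hid : Tendsto (fun e : ℝ => e) (𝓝[>] 0) (𝓝 0) := tendsto_id.mono_left nhdsWithin_le_nhds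
  have hsq : Tendsto (fun e : ℝ => √(e⁻¹)) (𝓝[>] 0) atTop := Real.tendsto_sqrt_atTop.comp hinv
  have hp : Tendsto (fun e : ℝ => (⌈(1 / 16 : ℝ) * e⁻¹⌉₊ : ℝ) / e⁻¹) (𝓝[>] 0) (𝓝 (1 / 16)) :=
    (tendsto_nat_ceil_mul_div_atTop (by norm_num)).comp hinv
  have hq : Tendsto (fun e : ℝ => ((⌈c * √(e⁻¹)⌉₊ : ℝ) / √(e⁻¹)) ^ 2) (𝓝[>] 0)
      (𝓝 (N ^ 2 * m / 8)) := by
    rw [← hc2]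
    exact ((tendsto_nat_ceil_mul_div_atTop hcpos.le).comp hsq).pow 2
  have key : ∀ p q : ℝ → ℝ, Tendsto p (𝓝[>] 0) (𝓝 (1 / 16)) →
      Tendsto q (𝓝[>] 0) (𝓝 (N ^ 2 * m / 8)) →
      Tendsto (fun e : ℝ => ((m : ℝ) * N ^ 2 / 2) * (q e * (p e ^ 2 + e * q e))
        / (4 * N ^ 4 * (m : ℝ) ^ 2 * (p e ^ 2 + e * q e + 4 * (m : ℝ) ^ 2 * e ^ 2) + q e ^ 2)
        - (p e ^ 2 + e * q e + 4 * (m : ℝ) ^ 2 * e ^ 2)) (𝓝[>] 0) (𝓝 (1 / 2 ^ 8)) := by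
    intro p q hp hq
    have hA := (hp.pow 2).add (hid.mul hq)
    have hB := hA.add ((hid.pow 2).const_mul (4 * (m : ℝ) ^ 2))
    have hD := (hB.const_mul (4 * N ^ 4 * (m : ℝ) ^ 2)).add (hq.pow 2)
    have := (((hq.mul hA).const_mul ((m : ℝ) * N ^ 2 / 2)).div hD (by positivity)).sub hB
    have heq : (m : ℝ) * N ^ 2 / 2 * (N ^ 2 * m / 8 * ((1 / 16) ^ 2 + 0 * (N ^ 2 * m / 8))) /
        (4 * N ^ 4 * (m : ℝ) ^ 2 * ((1 / 16) ^ 2 + 0 * (N ^ 2 * m / 8) + 4 * (m : ℝ) ^ 2 * 0 ^ 2)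
          + (N ^ 2 * m / 8) ^ 2) -
        ((1 / 16) ^ 2 + 0 * (N ^ 2 * m / 8) + 4 * (m : ℝ) ^ 2 * 0 ^ 2) = 1 / 2 ^ 8 := by
      rw [sub_eq_iff_eq_add, div_eq_iff (by positivity)]
      ring
    rw [heq] at this
    exact this
  have hlow := key _ _ hp hq
  have hlim : Tendsto (fun e : ℝ => e * mgMaxGrowth N m e) (𝓝[>] 0) (𝓝 (1 / 2 ^ 8)) := by
    refine tendsto_of_tendsto_of_tendsto_of_le_of_le' hlow tendsto_const_nhds ?_ ?_
    · filter_upwards [self_mem_nhdsWithin] with e he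
      have he : 0 < e := he
      have hk1 : 0 < ⌈(1 / 16 : ℝ) * e⁻¹⌉₊ := Nat.ceil_pos.2 (by positivity)
      have hk2 : 0 < ⌈c * √(e⁻¹)⌉₊ := Nat.ceil_pos.2 (by positivity)
      have hs2 : √(e⁻¹) ^ 2 = e⁻¹ := Real.sq_sqrt (by positivity)
      have hle : _ ≤ mgMaxGrowth N m e := le_csSup ⟨_, hub e he⟩
        ⟨(⌈(1 / 16 : ℝ) * e⁻¹⌉₊ : ℤ), (⌈c * √(e⁻¹)⌉₊ : ℤ), by exact_mod_cast hk1.ne',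
          by exact_mod_cast hk2.ne', rfl⟩
      refine le_trans (le_of_eq ?_) (mul_le_mul_of_nonneg_left hle he.le)
      rw [div_pow _ (√(e⁻¹)), hs2]
      have hk2' : (0 : ℝ) < ⌈c * √(e⁻¹)⌉₊ := by exact_mod_cast hk2
      push_cast
      generalize (⌈c * √(e⁻¹)⌉₊ : ℝ) = y at *
      generalize (⌈(1 / 16 : ℝ) * e⁻¹⌉₊ : ℝ) = x at *
      simp only [div_inv_eq_mul]
      have hd : 4 * N ^ 4 * (m : ℝ) ^ 2 * ((x * e) ^ 2 + e * (y ^ 2 * e) + 4 * (m : ℝ) ^ 2 * e ^ 2)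
          + (y ^ 2 * e) ^ 2
          = e ^ 2 * (4 * N ^ 4 * (m : ℝ) ^ 2 * (x ^ 2 + y ^ 2 + 4 * (m : ℝ) ^ 2) + y ^ 4) := by
        ring
      rw [hd]
      have hd0 : 0 < 4 * N ^ 4 * (m : ℝ) ^ 2 * (x ^ 2 + y ^ 2 + 4 * (m : ℝ) ^ 2) + y ^ 4 := by
        positivity
      generalize 4 * N ^ 4 * (m : ℝ) ^ 2 * (x ^ 2 + y ^ 2 + 4 * (m : ℝ) ^ 2) + y ^ 4 = D at *
      field_simp
    · filter_upwards [self_mem_nhdsWithin] with e he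
      have he : 0 < e := he
      have : mgMaxGrowth N m e ≤ 1 / 256 / e :=
        csSup_le ⟨_, 1, 1, one_ne_zero, one_ne_zero, rfl⟩ (hub e he)
      rw [le_div_iff₀ he] at this
      linarith
  exact hlim.liminf_eq.ge
end

section
/- Let N > 0, let m ≥ 1 be an integer and let k1, k2 be nonzero integers. Then there exists a real number σ_* = σ_*(k1,k2,m,N) > 0 and a sequence (c_p)_{p≥1} of reals with c_1 = α_1 which decays exponentially in p, such that (c_p) solves the MG eigenvalue recursion with constant shifts σ_p = σ_* for all p ≥ 1, and moreover σ_* ≥ (m N²/2) · k2²(k1² + k2²)/(4N⁴m²(k1² + k2² + 4m²) + k2⁴). -/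
/-- The shooting sequence. -/
noncomputable def shootMG (α : ℕ → ℝ) (s : ℝ) : ℕ → ℝ
  | 0 => 0
  | 1 => 1
  | (n + 2) => s * α (n + 1) * shootMG α s (n + 1) - shootMG α s n

lemma shootMG_continuous (α : ℕ → ℝ) (n : ℕ) :
    Continuous (fun s => shootMG α s n) ∧ Continuous (fun s => shootMG α s (n + 1)) := by
  induction n with
  | zero => simp only [shootMG]; exact ⟨continuous_const, continuous_const⟩
  | succ n ih =>
    refine ⟨ih.2, ?_⟩
    simp only [shootMG]
    have h1 := ih.1
    have h2 := ih.2
    fun_prop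

lemma shootMG_cont (α : ℕ → ℝ) (n : ℕ) : Continuous (fun s => shootMG α s n) :=
  (shootMG_continuous α n).1

lemma decay_aux (u : ℕ → ℝ) (hu : ∀ p, 1 ≤ p → 0 ≤ u p) (P : ℕ) (hP : 1 ≤ P)
    (h : ∀ q, P ≤ q → u (q + 1) ≤ u q / 2) :
    ∃ C : ℝ, 0 < C ∧ ∀ p, 1 ≤ p → u p ≤ C * (1 / 2) ^ p := by
  have hs : ∀ p, 1 ≤ p → p ≤ P → u p * 2 ^ p ≤ ∑ i ∈ Finset.Icc 1 P, u i * 2 ^ i := by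
    intro p h1 h2
    apply Finset.single_le_sum (f := fun i => u i * 2 ^ i)
    · intro i hi
      have := hu i (Finset.mem_Icc.1 hi).1
      positivity
    · exact Finset.mem_Icc.2 ⟨h1, h2⟩
  have hl : ∀ p, P ≤ p → u p * 2 ^ p ≤ u P * 2 ^ P := by
    intro p hp
    induction p, hp using Nat.le_induction with
    | base => exact le_rfl
    | succ q hq ih =>
      refine le_trans ?_ ih
      have := mul_le_mul_of_nonneg_right (h q hq) (by positivity : (0 : ℝ) ≤ 2 ^ (q + 1))
      rw [pow_succ] at this ⊢
      linarith
  set C := ∑ i ∈ Finset.Icc 1 P, u i * 2 ^ i with hC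
  have hC0 : 0 ≤ C := by
    apply Finset.sum_nonneg
    intro i hi
    have := hu i (Finset.mem_Icc.1 hi).1
    positivity
  refine ⟨C + 1, by linarith, ?_⟩
  intro p hp
  have key : u p * 2 ^ p ≤ C + 1 := by
    rcases le_total p P with h1 | h1
    · linarith [hs p hp h1]
    · linarith [hl p h1, hs P hP le_rfl]
  rw [one_div, inv_pow, ← div_eq_mul_inv, le_div_iff₀ (by positivity)]
  exact key

lemma abstract_exists (α : ℕ → ℝ) (hpos : ∀ p, 0 < α p)
    (hmono : Monotone α) (htop : Filter.Tendsto α Filter.atTop Filter.atTop)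
    (h16 : ∀ p, 1 ≤ p → α (p + 1) ≤ 16 * α p) :
    ∃ s : ℝ, 0 < s ∧ 1 / α 2 ≤ s ∧ ∃ c : ℕ → ℝ, c 1 = α 1 ∧ DecaysExponentially c ∧
      SolvesMGRecursion α (fun _ => s) c := by
  set d := shootMG α with hd
  have d0 : ∀ s, d s 0 = 0 := fun s => rfl
  have d1 : ∀ s, d s 1 = 1 := fun s => rfl
  have drec : ∀ s n, d s (n + 2) = s * α (n + 1) * d s (n + 1) - d s n := fun s n => rfl
  have dc : ∀ n, Continuous (fun s => d s n) := shootMG_cont α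
  set S : Set ℝ := {s | 0 < s ∧ ∀ p, 1 ≤ p → 0 < d s p} with hS
  have hα1 := hpos 1
  have hα2 := hpos 2
  -- nonempty
  have hne : S.Nonempty := by
    refine ⟨2 / α 1, by positivity, ?_⟩
    have key : ∀ n, 0 < d (2 / α 1) (n + 1) ∧ d (2 / α 1) n ≤ d (2 / α 1) (n + 1) := by
      intro n
      induction n with
      | zero => simp [d0, d1]
      | succ n ih =>
        have h2 : 2 ≤ 2 / α 1 * α (n + 1) := by
          rw [div_mul_eq_mul_div, le_div_iff₀ hα1]
          have := hmono (show 1 ≤ n + 1 by omega)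
          linarith
        have := mul_le_mul_of_nonneg_right h2 ih.1.le
        rw [drec]
        constructor <;> linarith [ih.1, ih.2]
    intro p hp
    obtain ⟨n, rfl⟩ : ∃ n, p = n + 1 := ⟨p - 1, by omega⟩
    exact (key n).1
  have hlow : ∀ s ∈ S, 1 / α 2 ≤ s := by
    rintro s ⟨hs, h⟩
    have h3 := h 3 (by norm_num)
    rw [drec s 1, drec s 0, d0, d1] at h3
    norm_num at h3
    rw [div_le_iff₀ hα2]
    by_contra hcon
    push Not at hcon
    have h12 : α 1 ≤ α 2 := hmono (by norm_num)
    have : s * α 1 ≤ s * α 2 := mul_le_mul_of_nonneg_left h12 hs.le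
    have h5 : 0 < s * α 1 := by positivity
    nlinarith
  have hbdd : BddBelow S := ⟨_, hlow⟩
  set s := sInf S with hsdef
  have hs1 : 1 / α 2 ≤ s := le_csInf hne hlow
  have hs0 : 0 < s := lt_of_lt_of_le (by positivity) hs1
  have hcl : s ∈ closure S := csInf_mem_closure hne hbdd
  have hnn : ∀ p, 0 ≤ d s p := by
    intro p
    rcases Nat.eq_zero_or_pos p with rfl | hp
    · rw [d0]
    · have hclosed : IsClosed {t | 0 ≤ d t p} := isClosed_le continuous_const (dc p)
      exact closure_minimal (fun t ht => (ht.2 p hp).le) hclosed hcl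
  have hdp : ∀ n, 0 < d s (n + 1) := by
    intro n
    induction n with
    | zero => simp [d1]
    | succ n ih =>
      rcases (hnn (n + 2)).lt_or_eq with h | h
      · exact h
      · have := hnn (n + 3)
        rw [drec s (n + 1), ← h] at this
        linarith
  -- decay
  obtain ⟨P0, hP0⟩ := Filter.eventually_atTop.1 (htop.eventually_ge_atTop (128 / s))
  set P := P0 + 1
  have hratio : ∀ q, P ≤ q → d s (q + 1) ≤ d s q / 32 := by
    intro q hq
    by_contra hcon
    push Not at hcon
    have e1 : ∀ᶠ t in nhds s, d t q / 32 < d t (q + 1) :=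
      ((dc q).div_const 32).continuousAt.eventually_lt (dc (q + 1)).continuousAt hcon
    have e2 : ∀ᶠ t in nhds s, ∀ i ∈ Finset.range (q + 1), 0 < d t (i + 1) := by
      rw [Filter.eventually_all_finset]
      intro i _
      exact continuousAt_const.eventually_lt (dc (i + 1)).continuousAt (hdp i)
    have e3 : ∀ᶠ t in nhds s, s / 2 < t := lt_mem_nhds (by linarith)
    have e := (e1.and (e2.and e3)).filter_mono (nhdsWithin_le_nhds (s := Set.Iio s))
    obtain ⟨t, ⟨ht1, ht2, ht3⟩, hts⟩ := (e.and self_mem_nhdsWithin).exists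
    have ht0 : 0 < t := by linarith
    have key : ∀ r, q ≤ r → 0 < d t r ∧ 0 < d t (r + 1) ∧ d t r / 32 < d t (r + 1) := by
      intro r hr
      induction r, hr using Nat.le_induction with
      | base =>
        refine ⟨?_, ht2 q (by simp), ht1⟩
        obtain ⟨j, rfl⟩ : ∃ j, q = j + 1 := ⟨q - 1, by omega⟩
        exact ht2 j (by simp)
      | succ r hr ih =>
        obtain ⟨i1, i2, i3⟩ := ih
        have ha := hP0 (r + 1) (by omega)
        rw [div_le_iff₀ hs0] at ha
        have h64 : 64 ≤ t * α (r + 1) := by nlinarith [hpos (r + 1)]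
        have := mul_le_mul_of_nonneg_right h64 i2.le
        rw [drec t r]
        refine ⟨i2, ?_, ?_⟩ <;> linarith
    have htS : t ∈ S := by
      refine ⟨ht0, ?_⟩
      intro p hp
      rcases le_total q p with h | h
      · exact (key p h).1
      · obtain ⟨j, rfl⟩ : ∃ j, p = j + 1 := ⟨p - 1, by omega⟩
        exact ht2 j (by simp; omega)
    have := csInf_le hbdd htS
    exact absurd hts (not_lt.2 this)
  obtain ⟨C, hC, hdec⟩ := decay_aux (fun p => α p * d s p)
    (fun p _ => mul_nonneg (hpos p).le (hnn p)) P (by omega) (by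
      intro q hq
      have a := hratio q hq
      have b := h16 q (by omega)
      have := mul_le_mul b a (hnn _) (by linarith [hpos q])
      linarith)
  refine ⟨s, hs0, hs1, fun p => (-1) ^ (p + 1) * (α p * d s p), ?_, ?_, ?_, ?_⟩
  · simp [d1]
  · refine ⟨C, hC, 1 / 2, by constructor <;> norm_num, ?_⟩
    intro p hp
    rw [abs_mul, abs_pow, abs_neg, abs_one, one_pow, one_mul,
      abs_of_nonneg (mul_nonneg (hpos p).le (hnn p))]
    exact hdec p hp
  · have := drec s 0
    simp only [zero_add] at this
    simp only [this, d0, d1]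
    field_simp
    ring
  · intro p hp
    obtain ⟨n, rfl⟩ : ∃ n, p = n + 2 := ⟨p - 2, by omega⟩
    have e : n + 2 - 1 = n + 1 := rfl
    have r := drec s (n + 1)
    have x1 := (hpos (n + 1)).ne'
    have x3 := (hpos (n + 2 + 1)).ne'
    simp only [e]
    rw [mul_div_assoc, mul_div_cancel_left₀ _ x3, mul_div_assoc, mul_div_cancel_left₀ _ x1,
      show d s (n + 2 + 1) = _ from r]
    ring

/-- **Unstable eigenvalue for the non-diffusive linearized MG operator (`ε_κ = 0`):** for
`N > 0`, an integer `m ≥ 1` and nonzero integers `k1, k2`, there exist `σ_* > 0` and an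
exponentially decaying sequence `(c_p)` with `c_1 = α_1` solving the MG eigenvalue
recursion with constant shifts `σ_p = σ_*`, and moreover
`σ_* ≥ (mN²/2)·k2²(k1²+k2²)/(4N⁴m²(k1²+k2²+4m²)+k2⁴)`. -/
theorem mg_nondiffusive_eigenvalue_exists (N : ℝ) (hN : 0 < N)
    (m : ℕ) (hm : 1 ≤ m) (k1 k2 : ℤ) (hk1 : k1 ≠ 0) (hk2 : k2 ≠ 0) :
    ∃ σstar : ℝ, 0 < σstar ∧
      ((m : ℝ) * N ^ 2 / 2) * ((k2 : ℝ) ^ 2 * ((k1 : ℝ) ^ 2 + (k2 : ℝ) ^ 2))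
          / (4 * N ^ 4 * (m : ℝ) ^ 2 * ((k1 : ℝ) ^ 2 + (k2 : ℝ) ^ 2 + 4 * (m : ℝ) ^ 2)
              + (k2 : ℝ) ^ 4) ≤ σstar ∧
      ∃ c : ℕ → ℝ, c 1 = alphaMG N m k1 k2 1 ∧ DecaysExponentially c ∧
        SolvesMGRecursion (alphaMG N m k1 k2) (fun _ => σstar) c := by
  have hmr : (1 : ℝ) ≤ m := by exact_mod_cast hm
  have hm0 : (0 : ℝ) < m := by linarith
  have hk1r : (0 : ℝ) < (k1 : ℝ) ^ 2 := by
    have : (k1 : ℝ) ≠ 0 := by exact_mod_cast hk1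
    positivity
  have hk2' : (k2 : ℝ) ≠ 0 := by exact_mod_cast hk2
  have hk2r : (0 : ℝ) < (k2 : ℝ) ^ 2 := by positivity
  have hk4 : (0 : ℝ) < (k2 : ℝ) ^ 4 := by positivity
  have hD : 0 < (m : ℝ) * N ^ 2 * (k2 : ℝ) ^ 2 * ((k1 : ℝ) ^ 2 + (k2 : ℝ) ^ 2) := by positivity
  have hmono : Monotone (alphaMG N m k1 k2) := by
    intro p q hpq
    have : (p : ℝ) ≤ q := by exact_mod_cast hpq
    unfold alphaMG
    gcongr
  have hlin : ∀ p : ℕ, 2 * N ^ 4 * (k1 : ℝ) ^ 2 / ((m : ℝ) * N ^ 2 * (k2 : ℝ) ^ 2 * ((k1 : ℝ) ^ 2 + (k2 : ℝ) ^ 2)) * p ≤ alphaMG N m k1 k2 p := by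
    intro p
    unfold alphaMG
    rw [div_mul_eq_mul_div]
    apply div_le_div_of_nonneg_right _ hD.le
    have hp : (p : ℝ) ≤ ((m : ℝ) * p) ^ 2 := by
      have h1 : (p : ℝ) ≤ (p : ℝ) ^ 2 := by exact_mod_cast Nat.le_self_pow (by norm_num) p
      have h2 : (1 : ℝ) ≤ (m : ℝ) ^ 2 := by nlinarith
      rw [mul_pow]
      nlinarith [sq_nonneg (p : ℝ)]
    have h3 : N ^ 4 * (p : ℝ) * (k1 : ℝ) ^ 2 ≤ N ^ 4 * ((m : ℝ) * (p : ℝ)) ^ 2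
        * ((k1 : ℝ) ^ 2 + (k2 : ℝ) ^ 2 + ((m : ℝ) * (p : ℝ)) ^ 2) := by
      gcongr
      nlinarith [sq_nonneg ((m : ℝ) * (p : ℝ))]
    linarith
  obtain ⟨s, hs0, hs1, h⟩ := abstract_exists (alphaMG N m k1 k2)
    (by intro p; unfold alphaMG; positivity) hmono
    (by
      refine Filter.tendsto_atTop_mono hlin ?_
      exact tendsto_natCast_atTop_atTop.const_mul_atTop (by positivity))
    (by
      intro p hp
      have hp' : (1 : ℝ) ≤ p := by exact_mod_cast hp
      unfold alphaMG
      rw [mul_div_assoc', div_le_div_iff_of_pos_right hD]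
      push_cast
      have hx : ((m : ℝ) * ((p : ℝ) + 1)) ^ 2 ≤ 4 * ((m : ℝ) * p) ^ 2 := by
        have : (m : ℝ) * ((p : ℝ) + 1) ≤ 2 * (m * p) := by nlinarith
        have h0 : 0 ≤ (m : ℝ) * ((p : ℝ) + 1) := by positivity
        nlinarith
      have h3 : N ^ 4 * ((m : ℝ) * ((p : ℝ) + 1)) ^ 2
          * ((k1 : ℝ) ^ 2 + (k2 : ℝ) ^ 2 + ((m : ℝ) * ((p : ℝ) + 1)) ^ 2)
          ≤ N ^ 4 * (4 * ((m : ℝ) * p) ^ 2)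
          * (4 * ((k1 : ℝ) ^ 2 + (k2 : ℝ) ^ 2 + ((m : ℝ) * p) ^ 2)) := by
        gcongr
        linarith
      linarith)
  refine ⟨s, hs0, le_trans (le_of_eq ?_) hs1, h⟩
  unfold alphaMG
  push_cast
  have hE : 4 * N ^ 4 * (m : ℝ) ^ 2 * ((k1 : ℝ) ^ 2 + (k2 : ℝ) ^ 2 + 4 * (m : ℝ) ^ 2)
              + (k2 : ℝ) ^ 4 ≠ 0 := by positivity
  rw [one_div_div, show N ^ 4 * ((m : ℝ) * 2) ^ 2 * ((k1 : ℝ) ^ 2 + (k2 : ℝ) ^ 2 + ((m : ℝ) * 2) ^ 2)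
      + (k2 : ℝ) ^ 4 = 4 * N ^ 4 * (m : ℝ) ^ 2 * ((k1 : ℝ) ^ 2 + (k2 : ℝ) ^ 2 + 4 * (m : ℝ) ^ 2)
              + (k2 : ℝ) ^ 4 by ring]
  rw [div_eq_div_iff hE (by positivity)]
  ring
end

section
/- Fix N > 0, ε_κ > 0, an integer m ≥ 1, and γ ∈ (0, 1/2). Then the sequence f(j) = (m N²/2) · j²(j⁴ + j²)/(4N⁴m²(j⁴ + j² + 4m²) + j⁴) − ε_κ(j⁴ + j² + 4m²)^γ tends to +∞ as the integer j → ∞. Consequently, in the fractional dissipation range γ ∈ (0, 1/2), the lower bound for the unstable eigenvalue at frequencies k1 = j², k2 = j diverges, i.e. the linearized fractionally diffusive MG operator has eigenvalues of arbitrarily large real part. -/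
/-- **Divergence of the eigenvalue lower bound for `γ ∈ (0, 1/2)`:** fix `N > 0`,
`ε_κ > 0`, an integer `m ≥ 1` and `γ ∈ (0, 1/2)`.  Then
`f(j) = (mN²/2)·j²(j⁴+j²)/(4N⁴m²(j⁴+j²+4m²)+j⁴) − ε_κ(j⁴+j²+4m²)^γ → +∞` as the integer
`j → ∞`; hence the linearized fractionally diffusive MG operator has eigenvalues of
arbitrarily large real part. -/
theorem mg_fractional_lower_bound_diverges (N εκ γ : ℝ) (hN : 0 < N) (hε : 0 < εκ)
    (hγ : γ ∈ Set.Ioo (0 : ℝ) (1 / 2)) (m : ℕ) (hm : 1 ≤ m) :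
    Filter.Tendsto
      (fun j : ℕ =>
        ((m : ℝ) * N ^ 2 / 2) * ((j : ℝ) ^ 2 * ((j : ℝ) ^ 4 + (j : ℝ) ^ 2))
            / (4 * N ^ 4 * (m : ℝ) ^ 2 * ((j : ℝ) ^ 4 + (j : ℝ) ^ 2 + 4 * (m : ℝ) ^ 2)
                + (j : ℝ) ^ 4)
          - εκ * ((j : ℝ) ^ 4 + (j : ℝ) ^ 2 + 4 * (m : ℝ) ^ 2) ^ γ)
      Filter.atTop Filter.atTop := by
  obtain ⟨h0, h1⟩ := hγ
  have hm' : (0 : ℝ) < m := by exact_mod_cast hm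
  set A : ℝ := 4 * N ^ 4 * (m : ℝ) ^ 2 with hA
  set B : ℝ := 2 + 4 * (m : ℝ) ^ 2 with hB
  have hA0 : 0 < A := by positivity
  have hB0 : 0 < B := by positivity
  set K : ℝ := (m : ℝ) * N ^ 2 / 2 with hK
  have hK0 : 0 < K := by positivity
  set c : ℝ := K / (A * B + 1) with hc
  have hc0 : 0 < c := by positivity
  set C : ℝ := εκ * B ^ γ with hC
  have hx : Filter.Tendsto (fun j : ℕ => (j : ℝ) ^ 2) Filter.atTop Filter.atTop :=
    (Filter.tendsto_pow_atTop two_ne_zero).comp tendsto_natCast_atTop_atTop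
  have hg : Filter.Tendsto (fun x : ℝ => x ^ (2 * γ) * (c * x ^ (1 - 2 * γ) - C))
      Filter.atTop Filter.atTop := by
    apply Filter.Tendsto.atTop_mul_atTop₀
    · exact tendsto_rpow_atTop (by linarith)
    · have := (tendsto_rpow_atTop (show 0 < 1 - 2 * γ by linarith)).const_mul_atTop hc0
      simpa [sub_eq_add_neg] using Filter.tendsto_atTop_add_const_right _ (-C) this
  refine Filter.tendsto_atTop_mono' _ ?_ (hg.comp hx)
  filter_upwards [Filter.eventually_ge_atTop 1] with j hj
  have hj1 : (1 : ℝ) ≤ j := by exact_mod_cast hj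
  simp only [Function.comp]
  obtain ⟨x, hxj⟩ : ∃ x : ℝ, x = (j : ℝ) ^ 2 := ⟨_, rfl⟩
  have hx1 : 1 ≤ x := by rw [hxj]; exact one_le_pow₀ hj1
  have hx4 : (j : ℝ) ^ 4 = x ^ 2 := by rw [hxj]; ring
  rw [hx4, ← hxj]
  have hx0 : 0 < x := by linarith
  have hS : x ^ 2 + x + 4 * (m : ℝ) ^ 2 ≤ B * x ^ 2 := by
    have : (1 : ℝ) ≤ x ^ 2 := one_le_pow₀ hx1
    have h3 : 4 * (m : ℝ) ^ 2 * 1 ≤ 4 * (m : ℝ) ^ 2 * x ^ 2 := by gcongr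
    rw [hB]; nlinarith
  have e1 : x ^ (2 * γ) * (c * x ^ (1 - 2 * γ) - C) = c * x - C * x ^ (2 * γ) := by
    have : x ^ (2 * γ) * x ^ (1 - 2 * γ) = x := by
      rw [← Real.rpow_add hx0]; simp
    linear_combination c * this
  have e2 : εκ * (x ^ 2 + x + 4 * (m : ℝ) ^ 2) ^ γ ≤ C * x ^ (2 * γ) := by
    have h4 : (x ^ 2 + x + 4 * (m : ℝ) ^ 2) ^ γ ≤ (B * x ^ 2) ^ γ :=
      Real.rpow_le_rpow (by positivity) hS h0.le
    have h5 : (B * x ^ 2) ^ γ = B ^ γ * x ^ (2 * γ) := by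
      rw [Real.mul_rpow hB0.le (by positivity), Real.rpow_mul hx0.le]
      norm_num
    rw [hC, mul_assoc, ← h5]
    gcongr
  have e3 : c * x ≤ K * (x * (x ^ 2 + x)) / (A * (x ^ 2 + x + 4 * (m : ℝ) ^ 2) + x ^ 2) := by
    rw [le_div_iff₀ (by positivity)]
    calc c * x * (A * (x ^ 2 + x + 4 * (m : ℝ) ^ 2) + x ^ 2)
        ≤ c * x * (A * (B * x ^ 2) + x ^ 2) := by gcongr
      _ = K * (x * x ^ 2) := by rw [hc]; field_simp
      _ ≤ K * (x * (x ^ 2 + x)) := by gcongr; linarith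
  rw [e1]
  linarith
end

section
/- Let N > 0, let m ≥ 1 be an integer, let ε_κ ≥ 0, and let j be a real number with j ≥ max(N⁴ m, 4m). Set k1 = j²/N² and k2 = j√m. Then (m N²/2) · k2²(k1² + k2²)/(4N⁴m²(k1² + k2² + 4m²) + k2⁴) − ε_κ √(k1² + k2² + 4m²) ≥ (j²/N²) · (1/26 − √3 ε_κ). In particular, if ε_κ < 1/(26√3), this lower bound tends to +∞ as j → ∞, uniformly in m and N. -/
/-- **Key estimate for the threshold case `γ = 1/2`:** let `N > 0`, `m ≥ 1` an integer,
`ε_κ ≥ 0`, and let `j` be a real number with `j ≥ max(N⁴m, 4m)`.  With `k1 = j²/N²` and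
`k2 = j√m`,
`(mN²/2)·k2²(k1²+k2²)/(4N⁴m²(k1²+k2²+4m²)+k2⁴) − ε_κ√(k1²+k2²+4m²)
  ≥ (j²/N²)·(1/26 − √3 ε_κ)`. -/
theorem mg_threshold_eigenvalue_lower_bound (N εκ : ℝ) (hN : 0 < N) (hε : 0 ≤ εκ)
    (m : ℕ) (hm : 1 ≤ m) (j : ℝ) (hj : max (N ^ 4 * (m : ℝ)) (4 * (m : ℝ)) ≤ j)
    (k1 k2 : ℝ) (hk1 : k1 = j ^ 2 / N ^ 2) (hk2 : k2 = j * Real.sqrt (m : ℝ)) :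
    (j ^ 2 / N ^ 2) * (1 / 26 - Real.sqrt 3 * εκ) ≤
      ((m : ℝ) * N ^ 2 / 2) * (k2 ^ 2 * (k1 ^ 2 + k2 ^ 2))
          / (4 * N ^ 4 * (m : ℝ) ^ 2 * (k1 ^ 2 + k2 ^ 2 + 4 * (m : ℝ) ^ 2) + k2 ^ 4)
        - εκ * Real.sqrt (k1 ^ 2 + k2 ^ 2 + 4 * (m : ℝ) ^ 2) := by
  have hm1 : (1 : ℝ) ≤ (m : ℝ) := by exact_mod_cast hm
  have h1 : N ^ 4 * (m : ℝ) ≤ j := le_trans (le_max_left _ _) hj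
  have h2 : 4 * (m : ℝ) ≤ j := le_trans (le_max_right _ _) hj
  have hj4 : 4 ≤ j := by linarith
  have hN4 : 0 < N ^ 4 := by positivity
  have hk2s : k2 ^ 2 = j ^ 2 * m := by
    rw [hk2, mul_pow, Real.sq_sqrt (by linarith)]
  have hk24 : k2 ^ 4 = j ^ 4 * (m : ℝ) ^ 2 := by
    have : k2 ^ 4 = (k2 ^ 2) ^ 2 := by ring
    rw [this, hk2s]; ring
  have hk1s : k1 ^ 2 = j ^ 4 / N ^ 4 := by
    rw [hk1, div_pow]; ring
  have hk1pos : 0 < k1 := by rw [hk1]; positivity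
  have hb1 : k2 ^ 2 ≤ k1 ^ 2 := by
    rw [hk2s, hk1s, le_div_iff₀ hN4]
    have e1 : j ^ 2 * (N ^ 4 * (m : ℝ)) ≤ j ^ 2 * j := by gcongr
    have e2 : j ^ 2 * j ≤ j ^ 2 * j * j := le_mul_of_one_le_right (by positivity) (by linarith)
    nlinarith
  have hb2 : 4 * (m : ℝ) ^ 2 ≤ k1 ^ 2 := by
    refine le_trans ?_ hb1
    rw [hk2s]
    have e1 : (4 * (m : ℝ)) * m ≤ j * m := by gcongr
    have e2 : j * m ≤ j * (j * m) := by
      have : (m : ℝ) ≤ j * m := le_mul_of_one_le_left (by linarith) (by linarith)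
      gcongr
    nlinarith
  have hS : k1 ^ 2 + k2 ^ 2 + 4 * (m : ℝ) ^ 2 ≤ 3 * k1 ^ 2 := by linarith
  have hsqrt : Real.sqrt (k1 ^ 2 + k2 ^ 2 + 4 * (m : ℝ) ^ 2) ≤ Real.sqrt 3 * k1 := by
    refine (Real.sqrt_le_sqrt hS).trans ?_
    rw [Real.sqrt_mul (by norm_num), Real.sqrt_sq hk1pos.le]
  have hD : 4 * N ^ 4 * (m : ℝ) ^ 2 * (k1 ^ 2 + k2 ^ 2 + 4 * (m : ℝ) ^ 2) + k2 ^ 4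
      ≤ 13 * (m : ℝ) ^ 2 * j ^ 4 := by
    have e1 : 4 * N ^ 4 * (m : ℝ) ^ 2 * (k1 ^ 2 + k2 ^ 2 + 4 * (m : ℝ) ^ 2)
        ≤ 4 * N ^ 4 * (m : ℝ) ^ 2 * (3 * k1 ^ 2) := by gcongr
    have e2 : 4 * N ^ 4 * (m : ℝ) ^ 2 * (3 * k1 ^ 2) = 12 * (m : ℝ) ^ 2 * j ^ 4 := by
      rw [hk1s]; field_simp; ring
    rw [hk24]; linarith
  have hDpos : 0 < 4 * N ^ 4 * (m : ℝ) ^ 2 * (k1 ^ 2 + k2 ^ 2 + 4 * (m : ℝ) ^ 2) + k2 ^ 4 := by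
    positivity
  have hmain : k1 * (1 / 26) ≤ ((m : ℝ) * N ^ 2 / 2) * (k2 ^ 2 * (k1 ^ 2 + k2 ^ 2))
          / (4 * N ^ 4 * (m : ℝ) ^ 2 * (k1 ^ 2 + k2 ^ 2 + 4 * (m : ℝ) ^ 2) + k2 ^ 4) := by
    rw [le_div_iff₀ hDpos]
    calc _ ≤ k1 * (1 / 26) * (13 * (m : ℝ) ^ 2 * j ^ 4) := by gcongr
      _ = ((m : ℝ) * N ^ 2 / 2) * (k2 ^ 2 * k1 ^ 2) := by
        rw [hk2s, hk1]; field_simp; norm_num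
      _ ≤ _ := by
        have : k1 ^ 2 ≤ k1 ^ 2 + k2 ^ 2 := by nlinarith [sq_nonneg k2]
        gcongr
  have hfin := mul_le_mul_of_nonneg_left hsqrt hε
  rw [← hk1]
  nlinarith
end
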